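/- For all indices 0 ≤ i < j ≤ d, the adjacency matrices of the wreath product satisfy A_i A_j = k_i A_j. -/

import Mathlib

open Finset Matrix

/-- Vertex set of the wreath product `K_{n 0} ≀ K_{n 1} ≀ ⋯ ≀ K_{n (d-1)}`
(paper indices `n_1, …, n_d` correspond to `n 0, …, n (d-1)`). -/
abbrev Vx (d : ℕ) (n : ℕ → ℕ) : Type := (i : Fin d) → Fin (n i)

/-- `delta x y = 0` if `x = y`; otherwise `delta x y` is the largest (1-based)
index at which `x` and `y` differ. -/
def delta {d : ℕ} {n : ℕ → ℕ} (x y : Vx d n) : ℕ :=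
  (Finset.univ.filter fun i => x i ≠ y i).sup fun i => (i : ℕ) + 1

/-- The `i`-th adjacency matrix of the wreath product: `(A i) x y = 1` iff `delta x y = i`. -/
noncomputable def A (d : ℕ) (n : ℕ → ℕ) (i : ℕ) : Matrix (Vx d n) (Vx d n) ℂ :=
  Matrix.of fun x y => if delta x y = i then 1 else 0

/-- The valencies: `k 0 = 1` and, for `1 ≤ i`, `k i = n_1 ⋯ n_{i-1} (n_i - 1)`,
i.e. `k i = n 0 ⋯ n (i-2) * (n (i-1) - 1)`. -/
def k (n : ℕ → ℕ) (i : ℕ) : ℕ :=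
  if i = 0 then 1 else (∏ j ∈ Finset.range (i - 1), n j) * (n (i - 1) - 1)

/-- The dual idempotent `E_i*` with respect to the base point `x₀`: the diagonal
0-1 matrix with `(E_i*)_{yy} = 1` iff `delta x₀ y = i`. -/
noncomputable def Es {d : ℕ} {n : ℕ → ℕ} (x₀ : Vx d n) (i : ℕ) :
    Matrix (Vx d n) (Vx d n) ℂ :=
  Matrix.of fun y z => if y = z ∧ delta x₀ y = i then 1 else 0

/-- The all-ones matrix `J`. -/
noncomputable def Jm (d : ℕ) (n : ℕ → ℕ) : Matrix (Vx d n) (Vx d n) ℂ :=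
  Matrix.of fun _ _ => 1

/-- The matrices `G i j`. -/
noncomputable def G {d : ℕ} {n : ℕ → ℕ} (x₀ : Vx d n) (i j : ℕ) :
    Matrix (Vx d n) (Vx d n) ℂ :=
  if i < j then ((k n j : ℂ))⁻¹ • (Es x₀ i * A d n j * Es x₀ j)
  else if j < i then ((k n j : ℂ))⁻¹ • (Es x₀ i * A d n i * Es x₀ j)
  else ((k n i : ℂ))⁻¹ • (Es x₀ i * Jm d n * Es x₀ i)

/-- The span `U` of the matrices `G i j`, `i, j ∈ [d]`. -/
noncomputable def Uspan {d : ℕ} {n : ℕ → ℕ} (x₀ : Vx d n) :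
    Submodule ℂ (Matrix (Vx d n) (Vx d n) ℂ) :=
  Submodule.span ℂ (Set.range fun p : Fin (d + 1) × Fin (d + 1) => G x₀ p.1 p.2)

/-- The Terwilliger algebra of the wreath product with respect to `x₀`. -/
noncomputable def Ter {d : ℕ} {n : ℕ → ℕ} (x₀ : Vx d n) :
    Subalgebra ℂ (Matrix (Vx d n) (Vx d n) ℂ) :=
  Algebra.adjoin ℂ
    ((Set.range fun i : Fin (d + 1) => A d n i) ∪ (Set.range fun i : Fin (d + 1) => Es x₀ i))

/-- The matrices `F i h`, for `1 ≤ i ≤ d` and `0 ≤ h ≤ i - 1`. -/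
noncomputable def F {d : ℕ} {n : ℕ → ℕ} (x₀ : Vx d n) (i h : ℕ) :
    Matrix (Vx d n) (Vx d n) ℂ :=
  if h < i - 1 then
    (∑ j ∈ Finset.range (h + 1), (k n j : ℂ))⁻¹ •
        (∑ j ∈ Finset.range (h + 1), Es x₀ i * A d n j * Es x₀ i)
      - (∑ j ∈ Finset.range (h + 2), (k n j : ℂ))⁻¹ •
          (∑ j ∈ Finset.range (h + 2), Es x₀ i * A d n j * Es x₀ i)
  else
    (∑ j ∈ Finset.range i, (k n j : ℂ))⁻¹ •
        (∑ j ∈ Finset.range i, Es x₀ i * A d n j * Es x₀ i)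
      - G x₀ i i

/-!
The function `delta` is an ultrametric, so whenever `delta x z = i < j`, the points `x` and `z` have
the same `j`-neighbours: the rows `x` and `z` of `A j` agree. Left multiplication by `A i` sums, in
row `x`, the rows indexed by the sphere of radius `i` about `x`; these are `k i` copies of row `x`.
-/

section

variable {d : ℕ} {n : ℕ → ℕ}

theorem delta_le_iff {x y : Vx d n} {m : ℕ} :
    delta x y ≤ m ↔ ∀ t : Fin d, m ≤ t → x t = y t := by
  simp only [delta, Finset.sup_le_iff, mem_filter_univ, Nat.succ_le_iff]
  exact forall_congr' fun t => by rw [← not_le, not_imp_not]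

theorem delta_comm (x y : Vx d n) : delta x y = delta y x := by
  simp only [delta, ne_comm]

theorem delta_le_max (x y z : Vx d n) : delta x z ≤ max (delta x y) (delta y z) :=
  delta_le_iff.2 fun t ht =>
    (delta_le_iff.1 (le_max_left _ _) t ht).trans (delta_le_iff.1 (le_max_right _ _) t ht)

theorem delta_eq_iff_of_delta_lt {x z : Vx d n} {j : ℕ} (h : delta x z < j) (y : Vx d n) :
    delta z y = j ↔ delta x y = j := by
  have hx := delta_le_max x z y
  have hz := delta_le_max z x y
  rw [delta_comm z x] at hz
  omega

theorem filter_delta_le_eq_piFinset (x : Vx d n) (m : ℕ) :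
    ({z | delta x z ≤ m} : Finset (Vx d n)) =
      Fintype.piFinset fun t : Fin d => if (t : ℕ) < m then univ else {x t} := by
  ext z
  simp only [mem_filter_univ, Fintype.mem_piFinset, delta_le_iff]
  refine forall_congr' fun t => ?_
  split_ifs with ht
  · simp [ht]
  · simp [not_lt.1 ht, eq_comm]

theorem card_filter_delta_le (x : Vx d n) {m : ℕ} (hm : m ≤ d) :
    #{z | delta x z ≤ m} = ∏ t ∈ range m, n t := by
  have range_filter : {t ∈ range d | t < m} = range m := by
    ext t
    simp only [mem_filter, mem_range]
    omega
  calc #{z | delta x z ≤ m}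
      = ∏ t : Fin d, if (t : ℕ) < m then n t else 1 := by
        simp only [filter_delta_le_eq_piFinset, Fintype.card_piFinset, apply_ite Finset.card,
          Finset.card_univ, Fintype.card_fin, card_singleton]
    _ = ∏ t ∈ range d, if t < m then n t else 1 :=
        Fin.prod_univ_eq_prod_range (fun t => if t < m then n t else 1) d
    _ = ∏ t ∈ range m, n t := by rw [← prod_filter, range_filter]

theorem card_filter_delta_eq (x : Vx d n) {i : ℕ} (hi : i ≤ d) :
    #{z | delta x z = i} = k n i := by
  cases i with
  | zero => simpa [k] using card_filter_delta_le x hi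
  | succ m =>
    have sphere_eq : ({z | delta x z = m + 1} : Finset (Vx d n)) =
        ({z | delta x z ≤ m + 1} : Finset (Vx d n)) \ ({z | delta x z ≤ m} : Finset (Vx d n)) := by
      ext z
      simp only [mem_sdiff, mem_filter_univ]
      omega
    have ball_subset : ({z | delta x z ≤ m} : Finset (Vx d n)) ⊆
        ({z | delta x z ≤ m + 1} : Finset (Vx d n)) :=
      monotone_filter_right _ fun _ _ hz => Nat.le_succ_of_le hz
    rw [sphere_eq, card_sdiff_of_subset ball_subset, card_filter_delta_le x hi,
      card_filter_delta_le x (Nat.le_of_succ_le hi), prod_range_succ, ← Nat.mul_sub_one]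
    simp [k]

theorem A_mul_eq_smul_of_row_eq {m : Type*} {i : ℕ} (hi : i ≤ d) {M : Matrix (Vx d n) m ℂ}
    (hM : ∀ x z, delta x z = i → M z = M x) : A d n i * M = (k n i : ℂ) • M := by
  ext x y
  calc (A d n i * M) x y
      = ∑ z with delta x z = i, M z y := by
        simp only [A, mul_apply, of_apply, ite_mul, one_mul, zero_mul, sum_filter]
    _ = ∑ z with delta x z = i, M x y :=
        sum_congr rfl fun z hz => by rw [hM x z ((mem_filter_univ z).1 hz)]
    _ = ((k n i : ℂ) • M) x y := by
        rw [sum_const, card_filter_delta_eq x hi, Matrix.smul_apply, Nat.cast_smul_eq_nsmul]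

theorem A_row_eq_of_delta_lt {x z : Vx d n} {j : ℕ} (h : delta x z < j) :
    A d n j z = A d n j x := by
  ext y
  simp only [A, of_apply, delta_eq_iff_of_delta_lt h]

end

/-- `A i * A j = k i • A j` for `0 ≤ i < j ≤ d`. -/
theorem stmt1 (d : ℕ) (hd : 1 ≤ d) (n : ℕ → ℕ) (hn : ∀ i < d, 2 ≤ n i)
    (i j : ℕ) (hij : i < j) (hj : j ≤ d) :
    A d n i * A d n j = (k n i : ℂ) • A d n j :=
  A_mul_eq_smul_of_row_eq (hij.le.trans hj) fun _ _ h => A_row_eq_of_delta_lt (h.trans_lt hij)
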